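/- Let m ≡ 3 (mod 4), q = 3^m, and v = (3^{(m+1)/4}−1)(3^{(m+1)/2}+1) + (3^m−1)/2. Then the number of pairs (a,b) ∈ GF(q)² such that wt(c(a,b)) = w equals: 1 if w = 0; (1/2)(3^m−1)(3^{m−1}+3^{(m−1)/2}) if w = 2(3^{m−1}−3^{(m−1)/2}); (3^m−1)(3^m−3^{m−1}+1) if w = 2·3^{m−1}; (1/2)(3^m−1)(3^{m−1}−3^{(m−1)/2}) if w = 2(3^{m−1}+3^{(m−1)/2}); and 0 for every other value of w. -/

import Mathlib

/-!
The weight of the codeword of `(a, b)` is read off the real part of the character sum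
`∑ x, ω ^ Tr (a * x + b * x ^ v)` over `F`, where `ω` is a primitive cube root of unity. With
`k = (m + 1) / 4` the exponent satisfies `(y ^ (3 ^ k + 1)) ^ v = y ^ 2`, and both `x ↦ x ^ v` and
the exponent in the sum are odd functions of `x`. As `-1` is not a square, the values of `y ^ 2` and
`-y ^ 2` together cover `F` exactly twice, so the real part does not change when `x` is replaced by
`y ^ (3 ^ k + 1)`. This turns the exponent into the quadratic form
`Tr (a * y ^ (3 ^ k + 1) + b * y ^ 2)`.

The radical of this form consists of solutions of a second order linear equation in the Frobenius
power `σ : y ↦ y ^ 3 ^ k`. Since `k` is prime to `m`, the fixed field of `σ` is the prime field, so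
the radical has dimension `d ≤ 2`. The sum has norm `3 ^ (m + d)`, and it lies in `ℤ[√-3]` because
the form takes equal values at `y` and `-y`. An element of this norm is `±(√-3) ^ (m + d)`, so its
real part is `0` when `m + d` is odd, and otherwise `d = 1` because `m` is odd.
So twice the real part takes only the values `0` and `±6 * r` with `r = 3 ^ ((m - 1) / 2)`, and its
first two moments over all `(a, b)` determine how often each of them occurs.
-/

namespace TernaryCyclicCode

open Finset

/-- `ω ^ t + ω ^ (-t)` for a primitive cube root of unity `ω`, i.e. `2 cos (2πt/3)`. Together with
`scaledSin` it replaces the values of the additive character of `ZMod 3` by integers. -/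
def twoCos (t : ZMod 3) : ℤ := if t = 0 then 2 else -1

/-- `(ω ^ t - ω ^ (-t)) / √-3` for a primitive cube root of unity `ω`, the companion of `twoCos`. -/
def scaledSin (t : ZMod 3) : ℤ := if t = 0 then 0 else if t = 1 then 1 else -1

lemma twoCos_zero : twoCos 0 = 2 := rfl

lemma twoCos_neg : ∀ t, twoCos (-t) = twoCos t := by decide

lemma twoCos_mul_twoCos : ∀ s t, twoCos s * twoCos t = twoCos (s + t) + twoCos (s - t) := by
  decide

lemma two_mul_twoCos_sub :
    ∀ s t, 2 * twoCos (s - t) = twoCos s * twoCos t + 3 * (scaledSin s * scaledSin t) := by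
  decide

lemma twoCos_add_add_eq_zero :
    ∀ s t : ZMod 3, t ≠ 0 → twoCos s + twoCos (s + t) + twoCos (s + (t + t)) = 0 := by decide

/-- Twice the real part of the character sum `∑ i, ω ^ f i`. -/
def cosSum {ι : Type*} [Fintype ι] (f : ι → ZMod 3) : ℤ := ∑ i, twoCos (f i)

/-- `2 / √3` times the imaginary part of the character sum `∑ i, ω ^ f i`. -/
def sinSum {ι : Type*} [Fintype ι] (f : ι → ZMod 3) : ℤ := ∑ i, scaledSin (f i)

section CharacterSums

variable {ι : Type*} [Fintype ι]

lemma cosSum_zero : cosSum (0 : ι → ZMod 3) = 2 * Fintype.card ι := by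
  simp [cosSum, twoCos_zero, mul_comm]

lemma three_mul_hammingNorm (f : ι → ZMod 3) :
    3 * (hammingNorm f : ℤ) = 2 * Fintype.card ι - cosSum f := by
  have twoCos_eq : ∀ t, twoCos t = 2 - 3 * if t ≠ 0 then 1 else 0 := by decide
  simp only [cosSum, twoCos_eq, sum_sub_distrib, ← mul_sum, sum_boole, hammingNorm, sum_const,
    card_univ, nsmul_eq_mul]
  ring

lemma cosSum_sq_add_three_mul_sinSum_sq (f : ι → ZMod 3) :
    cosSum f ^ 2 + 3 * sinSum f ^ 2 = 2 * ∑ i, ∑ j, twoCos (f j - f i) := by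
  simp only [cosSum, sinSum, sq, sum_mul_sum]
  simp only [mul_sum, two_mul_twoCos_sub, sum_add_distrib]
  congr 1 <;> exact sum_comm

end CharacterSums

section LinearFunctionals

variable {V : Type*} [AddCommGroup V] [Module (ZMod 3) V] [Fintype V]

lemma sum_twoCos_add_linear (c : ZMod 3) (ℓ : V →ₗ[ZMod 3] ZMod 3) [Decidable (ℓ = 0)] :
    ∑ p, twoCos (c + ℓ p) = if ℓ = 0 then Fintype.card V * twoCos c else 0 := by
  split_ifs with hℓ
  · simp [hℓ]
  obtain ⟨p₀, hp₀⟩ : ∃ p₀, ℓ p₀ ≠ 0 := by simpa [LinearMap.ext_iff] using hℓ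
  have sum_translate (p' : V) : ∑ p, twoCos (c + ℓ p + ℓ p') = ∑ p, twoCos (c + ℓ p) := by
    rw [← Equiv.sum_comp (Equiv.addRight p') fun p => twoCos (c + ℓ p)]
    simp only [Equiv.coe_addRight, map_add, add_assoc]
  have three_mul_sum : 3 * ∑ p, twoCos (c + ℓ p) = 0 := calc
    3 * ∑ p, twoCos (c + ℓ p)
      = ∑ p, (twoCos (c + ℓ p) + twoCos (c + ℓ p + ℓ p₀) +
          twoCos (c + ℓ p + (ℓ p₀ + ℓ p₀))) := by
        rw [sum_add_distrib, sum_add_distrib, ← map_add, sum_translate, sum_translate]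
        ring
    _ = 0 := sum_eq_zero fun p _ => twoCos_add_add_eq_zero _ _ hp₀
  simpa using three_mul_sum

variable {ι : Type*} [Fintype ι] {L : ι → V →ₗ[ZMod 3] ZMod 3}

lemma sum_cosSum_linear (hL : Function.Injective L) (h0 : 0 ∈ Set.range L) :
    ∑ p, cosSum (fun i => L i p) = 2 * Fintype.card V := by
  classical
  obtain ⟨o, ho⟩ := h0
  calc ∑ p, cosSum (fun i => L i p)
      = ∑ i, ∑ p, twoCos (0 + L i p) := by simp only [cosSum, zero_add]; exact sum_comm
    _ = ∑ i, if i = o then Fintype.card V * twoCos 0 else 0 := by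
        simp only [sum_twoCos_add_linear, ← ho, hL.eq_iff]
    _ = 2 * Fintype.card V := by simp [twoCos_zero, mul_comm]

lemma sum_cosSum_linear_sq (hL : Function.Injective L) (hneg : ∀ i, -L i ∈ Set.range L) :
    ∑ p, cosSum (fun i => L i p) ^ 2 = 4 * Fintype.card ι * Fintype.card V := by
  classical
  choose n hn using hneg
  have sum_pair (i j : ι) : ∑ p, twoCos (L i p) * twoCos (L j p) =
      (if j = n i then 2 * (Fintype.card V : ℤ) else 0) +
        if j = i then 2 * (Fintype.card V : ℤ) else 0 := by
    have h1 := sum_twoCos_add_linear 0 (L i + L j)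
    have h2 := sum_twoCos_add_linear 0 (L i - L j)
    have e1 : L i + L j = 0 ↔ j = n i := by rw [← hL.eq_iff, hn, add_eq_zero_iff_eq_neg']
    have e2 : L i - L j = 0 ↔ j = i := by rw [← hL.eq_iff, sub_eq_zero, eq_comm]
    simp only [zero_add, e1, e2, twoCos_zero, mul_comm _ (2 : ℤ), LinearMap.add_apply,
      LinearMap.sub_apply] at h1 h2
    simp only [twoCos_mul_twoCos, sum_add_distrib, h1, h2]
  calc ∑ p, cosSum (fun i => L i p) ^ 2
      = ∑ i, ∑ j, ∑ p, twoCos (L i p) * twoCos (L j p) := by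
        simp only [cosSum, sq, sum_mul_sum]
        rw [sum_comm]
        exact sum_congr rfl fun i _ => sum_comm
    _ = 4 * Fintype.card ι * Fintype.card V := by
        simp only [sum_pair, sum_add_distrib, sum_ite_eq', mem_univ, if_true, sum_const, card_univ,
          nsmul_eq_mul]
        ring

end LinearFunctionals

section QuadraticForms

lemma even_sum_of_even_of_map_zero {G : Type*} [AddGroup G] [Fintype G]
    (hG : ∀ y : G, -y = y → y = 0) {f : G → ℤ} (hf : f.Even) (h0 : f 0 = 0) :
    Even (∑ y, f y) := by
  rw [← ZMod.intCast_eq_zero_iff_even, Int.cast_sum]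
  refine sum_involution (fun y _ => -y) (fun y _ => ?_) (fun y _ hy hyy => ?_)
    (fun _ _ => mem_univ _) (fun y _ => neg_neg y)
  · rw [hf]
    exact CharTwo.add_self_eq_zero _
  · rw [hG y hyy, h0, Int.cast_zero] at hy
    exact hy rfl

/-- The conclusion expresses that `3` is ramified in `ℤ[√-3]`: an element of norm `3 ^ n` is
`±(√-3) ^ n`. -/
lemma eq_zero_of_sq_add_three_mul_sq_eq_three_pow {T U : ℤ} {n : ℕ}
    (h : T ^ 2 + 3 * U ^ 2 = 3 ^ n) : (Even n → U = 0) ∧ (Odd n → T = 0) := by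
  induction n generalizing T U with
  | zero =>
    have hU : U ^ 2 = 0 := by nlinarith [sq_nonneg T, sq_nonneg U]
    exact ⟨fun _ => pow_eq_zero_iff two_ne_zero |>.1 hU, by simp⟩
  | succ n ih =>
    obtain ⟨T', rfl⟩ : 3 ∣ T := by
      refine Int.prime_three.dvd_of_dvd_pow (n := 2) ⟨3 ^ n - U ^ 2, ?_⟩
      linear_combination h
    obtain ⟨hT', hU⟩ := ih (T := U) (U := T') (by linarith [pow_succ (3 : ℤ) n])
    simp only [Nat.even_add_one, Nat.odd_add_one, Nat.not_even_iff_odd, Nat.not_odd_iff_even]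
    exact ⟨hU, fun hn => by rw [hT' hn, mul_zero]⟩

variable {V : Type*} [AddCommGroup V] [Module (ZMod 3) V] [Fintype V]

open Module

lemma sum_sum_twoCos_quadraticForm_sub (Q : QuadraticForm (ZMod 3) V) :
    ∑ x, ∑ y, twoCos (Q y - Q x) = 2 * 3 ^ (finrank (ZMod 3) V + finrank (ZMod 3) Q.radical) := by
  classical
  have : Invertible (2 : ZMod 3) := ⟨2, by decide, by decide⟩
  have mem_radical (h : V) : Q.polarBilin h = 0 ↔ h ∈ Q.radical := by
    rw [QuadraticMap.radical_eq_ker_polarBilin, LinearMap.mem_ker]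
  calc ∑ x, ∑ y, twoCos (Q y - Q x)
      = ∑ x, ∑ h, twoCos (Q h + Q.polarBilin h x) := by
        refine sum_congr rfl fun x _ => ?_
        rw [← Equiv.sum_comp (Equiv.addRight x)]
        refine sum_congr rfl fun h _ => congrArg twoCos ?_
        rw [Equiv.coe_addRight, QuadraticMap.map_add Q, QuadraticMap.polarBilin_apply_apply]
        ring
    _ = ∑ h, if h ∈ Q.radical then (Fintype.card V : ℤ) * 2 else 0 := by
        rw [sum_comm]
        refine sum_congr rfl fun h _ => ?_
        rw [sum_twoCos_add_linear]
        by_cases hh : h ∈ Q.radical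
        · rw [if_pos hh, if_pos ((mem_radical h).2 hh), hh.1, twoCos_zero]
        · rw [if_neg hh, if_neg (mt (mem_radical h).1 hh)]
    _ = 2 * 3 ^ (finrank (ZMod 3) V + finrank (ZMod 3) Q.radical) := by
        rw [← sum_filter, sum_const, ← Fintype.card_subtype, nsmul_eq_mul,
          card_eq_pow_finrank (K := ZMod 3) (V := Q.radical),
          card_eq_pow_finrank (K := ZMod 3) (V := V), ZMod.card]
        push_cast
        ring

theorem cosSum_quadraticForm (Q : QuadraticForm (ZMod 3) V) {n : ℕ}
    (hn : finrank (ZMod 3) V + finrank (ZMod 3) Q.radical = n) :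
    (Even n → cosSum Q ^ 2 = 4 * 3 ^ n) ∧ (Odd n → cosSum Q = 0) := by
  have norm_eq : cosSum Q ^ 2 + 3 * sinSum Q ^ 2 = 4 * 3 ^ n := by
    rw [cosSum_sq_add_three_mul_sinSum_sq, sum_sum_twoCos_quadraticForm_sub, hn]
    ring
  obtain ⟨U, hU⟩ : 2 ∣ sinSum Q := by
    refine (even_sum_of_even_of_map_zero (fun y hy => ?_) (fun y => ?_) ?_).two_dvd
    · have two_smul_y : (2 : ZMod 3) • y = 0 := by
        rw [two_smul]
        nth_rw 1 [← hy]
        exact neg_add_cancel y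
      exact (smul_eq_zero_iff_right (by decide)).1 two_smul_y
    · rw [QuadraticMap.map_neg]
    · rw [QuadraticMap.map_zero]; rfl
  obtain ⟨T, hT⟩ : 2 ∣ cosSum Q := by
    refine Int.prime_two.dvd_of_dvd_pow (n := 2) ⟨2 * 3 ^ n - 6 * U ^ 2, ?_⟩
    rw [hU] at norm_eq
    linear_combination norm_eq
  rw [hT, hU] at norm_eq
  obtain ⟨hU₀, hT₀⟩ := eq_zero_of_sq_add_three_mul_sq_eq_three_pow
    (show T ^ 2 + 3 * U ^ 2 = 3 ^ n by linarith)
  refine ⟨fun hev => ?_, fun hodd => by rw [hT, hT₀ hodd, mul_zero]⟩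
  rw [hT, ← norm_eq, hU₀ hev]
  ring

end QuadraticForms

section ThreeValued

variable {ι : Type*} {S : Finset ι} {x : ι → ℤ} {s : ℤ}

lemma two_mul_sq_mul_card_filter_eq (hs : s ≠ 0) (hx : ∀ i ∈ S, x i = 0 ∨ x i = s ∨ x i = -s) :
    2 * s ^ 2 * #{i ∈ S | x i = s} = ∑ i ∈ S, x i ^ 2 + s * ∑ i ∈ S, x i := by
  have hss : -s ≠ s := by omega
  rw [card_filter, Nat.cast_sum, mul_sum, mul_sum, ← sum_add_distrib]
  refine sum_congr rfl fun i hi => ?_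
  rcases hx i hi with h | h | h
  · simp [h, hs.symm]
  · simp only [h, if_true, Nat.cast_one]; ring
  · simp only [h, if_neg hss, Nat.cast_zero]; ring

lemma sq_mul_card_filter_eq_zero (hs : s ≠ 0) (hx : ∀ i ∈ S, x i = 0 ∨ x i = s ∨ x i = -s) :
    s ^ 2 * #{i ∈ S | x i = 0} = s ^ 2 * #S - ∑ i ∈ S, x i ^ 2 := by
  rw [card_filter, Nat.cast_sum, mul_sum, ← nsmul_eq_mul', ← sum_const, ← sum_sub_distrib]
  refine sum_congr rfl fun i hi => ?_
  rcases hx i hi with h | h | h <;> simp [h, hs]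

end ThreeValued

section WeightDistribution

variable {V ι : Type*} [AddCommGroup V] [Module (ZMod 3) V] [Fintype ι]
  {L : ι → V →ₗ[ZMod 3] ZMod 3} {r : ℕ}

lemma hammingNorm_eq_iff_cosSum_eq (hι : Fintype.card ι = 3 * r ^ 2) (f : ι → ZMod 3) (w : ℕ) :
    hammingNorm f = w ↔ cosSum f = 6 * r ^ 2 - 3 * w := by
  have h := three_mul_hammingNorm f
  rw [hι] at h
  push_cast at h
  omega

lemma cosSum_linear_zero (hι : Fintype.card ι = 3 * r ^ 2) :
    cosSum (fun i => L i 0) = 6 * r ^ 2 := by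
  simp only [map_zero]
  change cosSum (0 : ι → ZMod 3) = _
  rw [cosSum_zero, hι]
  push_cast
  ring

lemma setOf_hammingNorm_linear_eq_zero (hr : 1 < r) (hι : Fintype.card ι = 3 * r ^ 2)
    (hval : ∀ p ≠ 0, cosSum (fun i => L i p) = 0 ∨ cosSum (fun i => L i p) = 6 * r ∨
      cosSum (fun i => L i p) = -(6 * r)) :
    {p | hammingNorm (fun i => L i p) = 0} = {0} := by
  refine Set.eq_singleton_iff_unique_mem.2 ⟨by simp [hammingNorm], fun p hp => ?_⟩
  by_contra hp₀
  have hcos := (hammingNorm_eq_iff_cosSum_eq hι _ 0).1 hp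
  have hrr : (r : ℤ) < r ^ 2 := lt_self_pow₀ (by exact_mod_cast hr) one_lt_two
  rcases hval p hp₀ with h | h | h <;> rw [h] at hcos <;> omega

variable [Fintype V]

lemma card_filter_cosSum_eq [DecidableEq V] (hL : Function.Injective L)
    (hneg : ∀ i, -L i ∈ Set.range L) (h0 : 0 ∈ Set.range L) (hr : r ≠ 0)
    (hι : Fintype.card ι = 3 * r ^ 2) (hV : Fintype.card V = 9 * r ^ 4)
    (hval : ∀ p ≠ 0, cosSum (fun i => L i p) = 0 ∨ cosSum (fun i => L i p) = 6 * r ∨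
      cosSum (fun i => L i p) = -(6 * r)) :
    (2 * #{p ∈ univ.erase 0 | cosSum (fun i => L i p) = 6 * r} : ℤ) =
        (3 * r ^ 2 - 1) * (r ^ 2 + r) ∧
      (#{p ∈ univ.erase 0 | cosSum (fun i => L i p) = 0} : ℤ) =
        (3 * r ^ 2 - 1) * (3 * r ^ 2 - r ^ 2 + 1) ∧
      (2 * #{p ∈ univ.erase 0 | cosSum (fun i => L i p) = -(6 * r)} : ℤ) =
        (3 * r ^ 2 - 1) * (r ^ 2 - r) := by
  have hs : (6 * r : ℤ) ≠ 0 := by positivity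
  have first_moment :
      ∑ p ∈ univ.erase 0, cosSum (fun i => L i p) = 18 * r ^ 4 - 6 * r ^ 2 := by
    rw [sum_erase_eq_sub (mem_univ _), sum_cosSum_linear hL h0, hV, cosSum_linear_zero hι]
    push_cast
    ring
  have second_moment :
      ∑ p ∈ univ.erase 0, cosSum (fun i => L i p) ^ 2 = 108 * r ^ 6 - 36 * r ^ 4 := by
    rw [sum_erase_eq_sub (mem_univ _), sum_cosSum_linear_sq hL hneg, hV, hι,
      cosSum_linear_zero hι]
    push_cast
    ring
  have card_erase : (#(univ.erase (0 : V)) : ℤ) = 9 * r ^ 4 - 1 := by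
    rw [cast_card_erase_of_mem (mem_univ _), card_univ, hV]
    push_cast
    rfl
  have hval' : ∀ p ∈ univ.erase (0 : V), cosSum (fun i => L i p) = 0 ∨
      cosSum (fun i => L i p) = 6 * r ∨ cosSum (fun i => L i p) = -(6 * r) :=
    fun p hp => hval p (ne_of_mem_erase hp)
  have hplus := two_mul_sq_mul_card_filter_eq hs hval'
  have hzero := sq_mul_card_filter_eq_zero hs hval'
  have hminus := two_mul_sq_mul_card_filter_eq (neg_ne_zero.2 hs)
    (by simpa only [neg_neg, or_comm (a := _ = (6 * r : ℤ))] using hval')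
  rw [first_moment, second_moment] at hplus hminus
  rw [second_moment, card_erase] at hzero
  have hr2 : (36 * r ^ 2 : ℤ) ≠ 0 := by positivity
  refine ⟨mul_left_cancel₀ hr2 ?_, mul_left_cancel₀ hr2 ?_, mul_left_cancel₀ hr2 ?_⟩
  · linear_combination hplus
  · linear_combination hzero
  · linear_combination hminus

lemma ncard_hammingNorm_linear_eq_card_filter [DecidableEq V]
    (hι : Fintype.card ι = 3 * r ^ 2) {w : ℕ} (hw : w ≠ 0) :
    {p | hammingNorm (fun i => L i p) = w}.ncard =
      #{p ∈ univ.erase 0 | cosSum (fun i => L i p) = 6 * r ^ 2 - 3 * w} := by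
  rw [← Set.ncard_coe_finset]
  congr 1
  ext p
  simp only [Set.mem_ofPred_eq, coe_filter, mem_erase, mem_univ, and_true,
    ← hammingNorm_eq_iff_cosSum_eq hι]
  refine ⟨fun h => ⟨?_, h⟩, And.right⟩
  rintro rfl
  exact hw (by simpa [hammingNorm] using h.symm)

theorem ncard_hammingNorm_linear_eq (hL : Function.Injective L) (hneg : ∀ i, -L i ∈ Set.range L)
    (h0 : 0 ∈ Set.range L) (hr : 1 < r) (hι : Fintype.card ι = 3 * r ^ 2)
    (hV : Fintype.card V = 9 * r ^ 4)
    (hval : ∀ p ≠ 0, cosSum (fun i => L i p) = 0 ∨ cosSum (fun i => L i p) = 6 * r ∨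
      cosSum (fun i => L i p) = -(6 * r)) (w : ℕ) :
    {p | hammingNorm (fun i => L i p) = w}.ncard =
      if w = 0 then 1
      else if w = 2 * (r ^ 2 - r) then (3 * r ^ 2 - 1) * (r ^ 2 + r) / 2
      else if w = 2 * r ^ 2 then (3 * r ^ 2 - 1) * (3 * r ^ 2 - r ^ 2 + 1)
      else if w = 2 * (r ^ 2 + r) then (3 * r ^ 2 - 1) * (r ^ 2 - r) / 2
      else 0 := by
  classical
  have hrr : r < r ^ 2 := lt_self_pow₀ hr one_lt_two
  have ncard_eq {w : ℕ} := ncard_hammingNorm_linear_eq_card_filter (L := L) (w := w) hι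
  obtain ⟨hplus, hzero, hminus⟩ := card_filter_cosSum_eq hL hneg h0 (by omega) hι hV hval
  have one_le : 1 ≤ 3 * r ^ 2 := by omega
  have sq_le : r ^ 2 ≤ 3 * r ^ 2 := by omega
  split_ifs with h₀ h₁ h₂ h₃
  · rw [h₀, setOf_hammingNorm_linear_eq_zero hr hι hval, Set.ncard_singleton]
  · rw [ncard_eq h₀, eq_comm]
    refine Nat.div_eq_of_eq_mul_right two_pos ?_
    zify [one_le]
    rw [← hplus, h₁]
    push_cast [hrr.le]
    ring_nf
  · rw [ncard_eq h₀]
    zify [one_le, sq_le]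
    rw [← hzero, h₂]
    push_cast
    ring_nf
  · rw [ncard_eq h₀, eq_comm]
    refine Nat.div_eq_of_eq_mul_right two_pos ?_
    zify [one_le, hrr.le]
    rw [← hminus, h₃]
    push_cast
    ring_nf
  · rw [ncard_eq h₀, Finset.card_eq_zero, filter_eq_empty_iff]
    intro p hp hpw
    zify [hrr.le] at h₁ h₂ h₃
    rcases hval p (ne_of_mem_erase hp) with h | h | h <;> rw [h] at hpw <;> omega

end WeightDistribution

section FixedField

open Module

variable {K L : Type*} [Field K] [Field L] [Algebra K L] {σ : L ≃ₐ[K] L} {A B C : L}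
  {W : Submodule K L}

lemma finrank_le_one_of_mul_map_eq (hσ : ∀ z, σ z = z → z ∈ Set.range (algebraMap K L))
    (hA : A ≠ 0) (hW : ∀ h ∈ W, A * σ h = C * h) : finrank K W ≤ 1 := by
  rcases eq_or_ne W ⊥ with rfl | hne
  · simp
  obtain ⟨u, hu, hu₀⟩ := W.exists_mem_ne_zero_of_ne_bot hne
  refine finrank_le_one (⟨u, hu⟩ : W) fun ⟨w, hw⟩ => ?_
  have hfix : σ (w / u) = w / u := by
    rw [map_div₀, div_eq_div_iff (by simpa using hu₀) hu₀]
    refine mul_left_cancel₀ hA ?_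
    linear_combination u * hW w hw - w * hW u hu
  obtain ⟨c, hc⟩ := hσ _ hfix
  refine ⟨c, Subtype.ext ?_⟩
  rw [Submodule.coe_smul, Algebra.smul_def, hc, div_mul_cancel₀ _ hu₀]

lemma finrank_le_two_of_mul_map_map_add_eq_zero [FiniteDimensional K L]
    (hσ : ∀ z, σ z = z → z ∈ Set.range (algebraMap K L)) (hA : A ≠ 0)
    (hW : ∀ h ∈ W, A * σ (σ h) + B * σ h + C * h = 0) : finrank K W ≤ 2 := by
  rcases eq_or_ne W ⊥ with rfl | hne
  · simp
  obtain ⟨u, hu, hu₀⟩ := W.exists_mem_ne_zero_of_ne_bot hne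
  -- The Casoratian with `u` reduces the order of the equation on both its kernel and its image.
  let δ : L →ₗ[K] L := LinearMap.mulLeft K u ∘ₗ σ.toLinearMap - LinearMap.mulLeft K (σ u)
  have δ_apply (h : L) : δ h = u * σ h - σ u * h := rfl
  have finrank_map_le : finrank K (W.map δ) ≤ 1 := by
    refine finrank_le_one_of_mul_map_eq hσ hA (C := C) ?_
    rintro _ ⟨h, hh, rfl⟩
    rw [δ_apply, map_sub, map_mul, map_mul]
    linear_combination σ u * hW h hh - σ h * hW u hu
  have finrank_ker_le : finrank K (δ.domRestrict W).ker ≤ 1 := by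
    rw [← Submodule.finrank_map_subtype_eq, LinearMap.ker_domRestrict]
    refine finrank_le_one_of_mul_map_eq hσ hu₀ (C := σ u) ?_
    rintro _ ⟨h, hh, rfl⟩
    exact sub_eq_zero.1 hh
  have rank_nullity := (δ.domRestrict W).finrank_range_add_finrank_ker
  rw [LinearMap.range_domRestrict] at rank_nullity
  omega

/-- The quadratic form `y ↦ Tr ((a * σ y + b * y) * y)`. For `σ` the `p ^ k`-power Frobenius this is
the form `Tr (a * y ^ (p ^ k + 1) + b * y ^ 2)` which arises from the exponential sums of the
code. -/
noncomputable def traceQuadraticForm (σ : L ≃ₐ[K] L) (a b : L) : QuadraticForm K L :=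
  LinearMap.BilinMap.toQuadraticMap <|
    (Algebra.traceForm K L).compLeft
      (LinearMap.mulLeft K a ∘ₗ σ.toLinearMap + LinearMap.mulLeft K b)

lemma traceQuadraticForm_apply (σ : L ≃ₐ[K] L) (a b y : L) :
    traceQuadraticForm σ a b y = Algebra.trace K L ((a * σ y + b * y) * y) := rfl

variable {a b : L}

lemma mul_map_map_add_eq_zero_of_mem_radical [FiniteDimensional K L] [Algebra.IsSeparable K L]
    {h : L} (hh : h ∈ (traceQuadraticForm σ a b).radical) :
    σ a * σ (σ h) + 2 * σ b * σ h + a * h = 0 := by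
  refine (traceForm_nondegenerate K L).1 _ fun z => ?_
  obtain ⟨y, rfl⟩ := σ.surjective z
  have polar_eq : Algebra.trace K L ((a * σ h + b * h) * y) +
      Algebra.trace K L ((a * σ y + b * y) * h) = 0 :=
    (LinearMap.BilinMap.polar_toQuadraticMap h y).symm.trans (DFunLike.congr_fun hh.2 y)
  rw [← map_add] at polar_eq
  calc Algebra.trace K L ((σ a * σ (σ h) + 2 * σ b * σ h + a * h) * σ y)
      = Algebra.trace K L (σ ((a * σ h + 2 * b * h) * y)) + Algebra.trace K L (a * h * σ y) := by
        rw [← map_add (Algebra.trace K L)]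
        simp only [map_mul, map_add, map_ofNat, add_mul]
    _ = Algebra.trace K L ((a * σ h + b * h) * y + (a * σ y + b * y) * h) := by
        rw [Algebra.trace_eq_of_algEquiv, ← map_add]
        ring_nf
    _ = 0 := polar_eq

lemma finrank_radical_traceQuadraticForm_le [FiniteDimensional K L] [Algebra.IsSeparable K L]
    (hσ : ∀ z, σ z = z → z ∈ Set.range (algebraMap K L)) (h2 : (2 : L) ≠ 0)
    (hab : a ≠ 0 ∨ b ≠ 0) : finrank K (traceQuadraticForm σ a b).radical ≤ 2 := by
  by_cases ha : a = 0
  · have hσb : 2 * σ b ≠ 0 := mul_ne_zero h2 (by simpa [ha] using hab)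
    refine (finrank_le_one_of_mul_map_eq hσ hσb (C := 0) fun h hh => ?_).trans one_le_two
    simpa [ha] using mul_map_map_add_eq_zero_of_mem_radical hh
  · exact finrank_le_two_of_mul_map_map_add_eq_zero hσ (by simpa using ha)
      fun h hh => mul_map_map_add_eq_zero_of_mem_radical hh

end FixedField

section SquareSubstitution

variable {F : Type*} [Field F]

lemma pow_injective_of_pow_pow_eq_sq {e v : ℕ} (h2 : ringChar F ≠ 2) (hv : Odd v)
    (hev : ∀ y : F, (y ^ e) ^ v = y ^ 2) : Function.Injective fun x : F => x ^ v := by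
  intro x y (hxy : x ^ v = y ^ v)
  have hsq : x ^ 2 = y ^ 2 := by rw [← hev, ← hev, pow_right_comm, hxy, pow_right_comm]
  rcases sq_eq_sq_iff_eq_or_eq_neg.1 hsq with h | rfl
  · exact h
  · rw [hv.neg_pow, Ring.eq_self_iff_eq_zero_of_char_ne_two h2, pow_eq_zero_iff hv.pos.ne'] at hxy
    rw [hxy, neg_zero]

lemma ringChar_ne_two_of_not_isSquare_neg_one [Finite F] (hF : ¬IsSquare (-1 : F)) :
    ringChar F ≠ 2 :=
  fun h => hF (FiniteField.isSquare_of_char_two h _)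

variable [Fintype F]

lemma card_sq_eq_add_card_neg_sq_eq [DecidableEq F] (hF : ¬IsSquare (-1 : F)) (s : F) :
    #{y | y ^ 2 = s} + #{y | -y ^ 2 = s} = 2 := by
  have card_sqrts (t : F) : (#{y | y ^ 2 = t} : ℤ) = quadraticChar F t + 1 := by
    rw [← quadraticChar_card_sqrts (ringChar_ne_two_of_not_isSquare_neg_one hF),
      Set.toFinset_ofPred]
  simp only [neg_eq_iff_eq_neg]
  zify
  rw [card_sqrts, card_sqrts, ← neg_one_mul s, map_mul,
    quadraticChar_neg_one_iff_not_isSquare.2 hF]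
  ring

lemma sum_sq_add_sum_neg_sq {M : Type*} [AddCommMonoid M] (hF : ¬IsSquare (-1 : F)) (g : F → M) :
    ∑ y, g (y ^ 2) + ∑ y, g (-y ^ 2) = 2 • ∑ s, g s := by
  classical
  rw [← sum_fiberwise' univ (fun y : F => y ^ 2) g,
    ← sum_fiberwise' univ (fun y : F => -y ^ 2) g, ← sum_add_distrib, smul_sum]
  simp only [sum_const, ← add_smul, card_sq_eq_add_card_neg_sq_eq hF]

lemma cosSum_comp_sq (hF : ¬IsSquare (-1 : F)) {f : F → ZMod 3} (hf : f.Odd) :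
    cosSum (fun y => f (y ^ 2)) = cosSum f := by
  have h := sum_sq_add_sum_neg_sq hF fun y => twoCos (f y)
  simp only [hf _, twoCos_neg, ← two_nsmul] at h
  exact nsmul_right_injective two_ne_zero h

lemma cosSum_comp_pow (hF : ¬IsSquare (-1 : F)) {e v : ℕ} (hv : Odd v)
    (hev : ∀ y : F, (y ^ e) ^ v = y ^ 2) {f : F → ZMod 3} (hf : f.Odd) :
    cosSum (fun y => f (y ^ e)) = cosSum f := by
  let φ : F ≃ F := Equiv.ofBijective _ <| Finite.injective_iff_bijective.1 <|
    pow_injective_of_pow_pow_eq_sq (ringChar_ne_two_of_not_isSquare_neg_one hF) hv hev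
  have φ_symm_sq (y : F) : φ.symm (y ^ 2) = y ^ e := by
    rw [Equiv.symm_apply_eq]
    exact (hev y).symm
  have φ_symm_neg (s : F) : φ.symm (-s) = -φ.symm s := by
    rw [Equiv.symm_apply_eq]
    change -s = (-φ.symm s) ^ v
    rw [hv.neg_pow]
    exact congrArg Neg.neg (φ.apply_symm_apply s).symm
  calc cosSum (fun y => f (y ^ e))
      = cosSum (fun y => f (φ.symm (y ^ 2))) := by simp only [φ_symm_sq]
    _ = cosSum (fun s => f (φ.symm s)) :=
        cosSum_comp_sq hF (f := fun s => f (φ.symm s)) fun s =>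
          (congrArg f (φ_symm_neg s)).trans (hf _)
    _ = cosSum f := Equiv.sum_comp φ.symm fun x => twoCos (f x)

end SquareSubstitution

section Frobenius

open Module

lemma mem_range_algebraMap_of_frobenius_pow_fixed {K L : Type*} [Field K] [Fintype K] [Field L]
    [Finite L] [Algebra K L] {k : ℕ} (hk : k.Coprime (finrank K L)) (z : L)
    (hz : (FiniteField.frobeniusAlgEquivOfAlgebraic K L ^ k) z = z) :
    z ∈ Set.range (algebraMap K L) := by
  rw [← FiniteField.orderOf_frobeniusAlgEquivOfAlgebraic] at hk
  obtain ⟨j, hj⟩ := exists_pow_eq_self_of_coprime hk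
  rw [IsGalois.mem_range_algebraMap_iff_fixed]
  intro g
  obtain ⟨n, rfl⟩ := (FiniteField.bijective_frobeniusAlgEquivOfAlgebraic_pow K L).2 g
  dsimp only
  rw [← hj, ← pow_mul, AlgEquiv.coe_pow]
  exact Function.IsFixedPt.iterate hz _

end Frobenius

section CyclicCode

open Module

variable {K L : Type*} [Field K] [Field L] [Algebra K L]

/-- The linear functional `(a, b) ↦ Tr (a * x) + Tr (b * x ^ v)`. Its value at `x = α ^ i` is the
`i`-th coordinate of the codeword of `(a, b)`. -/
noncomputable def coordFunctional (v : ℕ) (x : L) : L × L →ₗ[K] K :=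
  (Algebra.traceForm K L x).coprod (Algebra.traceForm K L (x ^ v))

lemma coordFunctional_apply (v : ℕ) (x : L) (p : L × L) :
    coordFunctional v x p = Algebra.trace K L (p.1 * x) + Algebra.trace K L (p.2 * x ^ v) := by
  simp [coordFunctional, Algebra.traceForm_apply, mul_comm]

lemma coordFunctional_zero {v : ℕ} (hv : v ≠ 0) :
    coordFunctional v 0 = (0 : L × L →ₗ[K] K) := by
  ext <;> simp [coordFunctional, hv]

lemma coordFunctional_neg {v : ℕ} (hv : Odd v) (x : L) :
    coordFunctional v (-x) = -coordFunctional (K := K) v x := by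
  ext <;> simp [coordFunctional_apply, hv.neg_pow]

lemma coordFunctional_injective [FiniteDimensional K L] [Algebra.IsSeparable K L] (v : ℕ) :
    Function.Injective (coordFunctional (K := K) (L := L) v) := by
  intro x y hxy
  refine LinearMap.ker_eq_bot.1
    (LinearMap.separatingLeft_iff_ker_eq_bot.1 (traceForm_nondegenerate K L).1) ?_
  simpa [coordFunctional] using congrArg (· ∘ₗ LinearMap.inl K L L) hxy

lemma hammingNorm_pow_generator [Fintype L] {M : Type*} [Zero M] [DecidableEq M] {α : Lˣ}
    (hα : ∀ x, x ∈ Subgroup.zpowers α) {n : ℕ} (hn : Fintype.card L - 1 = n) {f : L → M}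
    (hf : f 0 = 0) : hammingNorm (fun i : Fin n => f ((α : L) ^ (i : ℕ))) = hammingNorm f := by
  classical
  obtain rfl : orderOf α = n := by
    rw [orderOf_eq_card_of_forall_mem_zpowers hα, Nat.card_units, Nat.card_eq_fintype_card, hn]
  refine card_nbij (fun i => (α : L) ^ (i : ℕ)) (fun i hi => by simpa using hi) ?_ ?_
  · intro i _ j _ hij
    exact Fin.ext (pow_injOn_Iio_orderOf i.2 j.2 (Units.ext (by simpa using hij)))
  · intro y hy
    have hfy : f y ≠ 0 := by simpa using hy
    have hy₀ : y ≠ 0 := by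
      rintro rfl
      exact hfy hf
    have hy_mem := mem_zpowers_iff_mem_range_orderOf.1 (hα (Units.mk0 y hy₀))
    obtain ⟨i, hi, hiy⟩ := mem_image.1 hy_mem
    have pow_eq : (α : L) ^ i = y := by simpa using congrArg Units.val hiy
    exact ⟨⟨i, mem_range.1 hi⟩, by simpa [pow_eq] using hfy, pow_eq⟩

end CyclicCode

section Exponent

/-- The exponent `v` of the code, with `k` standing for `(m + 1) / 4`. -/
def codeExponent (m k : ℕ) : ℕ := (3 ^ k - 1) * (3 ^ (2 * k) + 1) + (3 ^ m - 1) / 2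

variable {m k : ℕ}

lemma three_pow_mod_four (hm : Odd m) : 3 ^ m % 4 = 3 := by
  obtain ⟨j, rfl⟩ := hm
  rw [pow_succ, pow_mul, Nat.mul_mod, Nat.pow_mod]
  norm_num

lemma odd_codeExponent (hm : Odd m) (k : ℕ) : Odd (codeExponent m k) := by
  refine Even.add_odd (Even.mul_right (Nat.Odd.sub_odd (Odd.pow (by decide)) odd_one) _) ?_
  have hmod := three_pow_mod_four hm
  rw [Nat.odd_iff]
  generalize 3 ^ m = n at hmod ⊢
  omega

lemma mul_codeExponent_add_one (hm : m + 1 = 4 * k) :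
    ∃ t, (3 ^ k + 1) * codeExponent m k + 1 = 3 ^ m * 3 + (3 ^ m - 1) * t := by
  obtain ⟨s, hs⟩ : Odd (3 ^ k) := Odd.pow (by decide)
  obtain ⟨u, hu⟩ : Odd (3 ^ m) := Odd.pow (by decide)
  refine ⟨s + 1, ?_⟩
  have pow_succ_eq : 3 ^ m * 3 = (3 ^ k) ^ 4 := by rw [← pow_succ, hm, ← pow_mul, mul_comm]
  rw [pow_succ_eq, codeExponent, mul_comm 2 k, pow_mul, hu, hs]
  simp only [Nat.add_sub_cancel, Nat.mul_div_cancel_left u two_pos]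
  ring

variable {F : Type*} [Field F] [Fintype F]

lemma pow_pow_codeExponent (hm : m + 1 = 4 * k) (hF : Fintype.card F = 3 ^ m) (y : F) :
    (y ^ (3 ^ k + 1)) ^ codeExponent m k = y ^ 2 := by
  rcases eq_or_ne y 0 with rfl | hy
  · have hv := odd_codeExponent (m := m) (by grind) k
    rw [zero_pow (by positivity), zero_pow hv.pos.ne', zero_pow two_ne_zero]
  · obtain ⟨t, ht⟩ := mul_codeExponent_add_one hm
    refine mul_right_cancel₀ hy ?_
    rw [← pow_mul, ← pow_succ, ht, pow_add, pow_mul, pow_mul, ← hF, FiniteField.pow_card,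
      FiniteField.pow_card_sub_one_eq_one y hy]
    ring

end Exponent

section CodeSums

open Module

variable {F : Type*} [Field F] [Fintype F] {m k : ℕ}

lemma not_isSquare_neg_one (hm : Odd m) (hF : Fintype.card F = 3 ^ m) : ¬IsSquare (-1 : F) := by
  rw [FiniteField.isSquare_neg_one_iff, hF, not_not]
  exact three_pow_mod_four hm

variable [Algebra (ZMod 3) F]

lemma finrank_eq_of_card_eq (hF : Fintype.card F = 3 ^ m) : finrank (ZMod 3) F = m := by
  rw [card_eq_pow_finrank (K := ZMod 3), ZMod.card] at hF
  exact Nat.pow_right_injective (by norm_num) hF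

lemma cosSum_coordFunctional_eq (hm : m + 1 = 4 * k) (hF : Fintype.card F = 3 ^ m) (p : F × F) :
    cosSum (fun x => coordFunctional (codeExponent m k) x p) =
      cosSum (traceQuadraticForm
        (FiniteField.frobeniusAlgEquivOfAlgebraic (ZMod 3) F ^ k) p.1 p.2) := by
  have hmo : Odd m := by grind
  have hv := odd_codeExponent hmo k
  have coord_odd : Function.Odd fun x : F => coordFunctional (K := ZMod 3) (codeExponent m k) x p :=
    fun x => DFunLike.congr_fun (coordFunctional_neg hv x) p
  rw [← cosSum_comp_pow (not_isSquare_neg_one hmo hF) hv (pow_pow_codeExponent hm hF) coord_odd]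
  refine congrArg cosSum (funext fun y => ?_)
  rw [coordFunctional_apply, traceQuadraticForm_apply, pow_pow_codeExponent hm hF,
    AlgEquiv.coe_pow, FiniteField.coe_frobeniusAlgEquivOfAlgebraic_iterate, ZMod.card, ← map_add]
  ring_nf

theorem cosSum_coordFunctional_eq_zero_or (hm : m + 1 = 4 * k) (hF : Fintype.card F = 3 ^ m)
    {r : ℕ} (hr : 3 ^ m = 3 * r ^ 2) {p : F × F} (hp : p ≠ 0) :
    cosSum (fun x => coordFunctional (codeExponent m k) x p) = 0 ∨
      cosSum (fun x => coordFunctional (codeExponent m k) x p) = 6 * r ∨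
      cosSum (fun x => coordFunctional (codeExponent m k) x p) = -(6 * r) := by
  set σ := FiniteField.frobeniusAlgEquivOfAlgebraic (ZMod 3) F ^ k with hσ
  set Q := traceQuadraticForm σ p.1 p.2 with hQ
  have hrank := finrank_eq_of_card_eq hF
  have coprime : k.Coprime (finrank (ZMod 3) F) := by
    rw [hrank, ← Nat.isCoprime_iff_coprime]
    exact ⟨4, -1, by zify at hm; linarith⟩
  have two_ne_zero : (2 : F) ≠ 0 :=
    Ring.two_ne_zero (ringChar_ne_two_of_not_isSquare_neg_one (not_isSquare_neg_one (by grind) hF))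
  have hrad : finrank (ZMod 3) Q.radical ≤ 2 :=
    finrank_radical_traceQuadraticForm_le (mem_range_algebraMap_of_frobenius_pow_fixed coprime)
      two_ne_zero (by contrapose! hp; exact Prod.ext hp.1 hp.2)
  obtain ⟨even_case, odd_case⟩ := cosSum_quadraticForm Q rfl
  rw [cosSum_coordFunctional_eq hm hF, ← hσ, ← hQ]
  rw [hrank] at even_case odd_case
  rcases Nat.even_or_odd (m + finrank (ZMod 3) Q.radical) with he | ho
  · have rad_eq : finrank (ZMod 3) Q.radical = 1 := by grind
    refine Or.inr (sq_eq_sq_iff_eq_or_eq_neg.1 ?_)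
    rw [even_case he, rad_eq, pow_succ, show (3 : ℤ) ^ m = 3 * r ^ 2 by exact_mod_cast hr]
    ring
  · exact Or.inl (odd_case ho)

end CodeSums

end TernaryCyclicCode

/-- weight distribution (Table II) of the ternary cyclic code
`C_{(1,v,3,m)}` with `m ≡ 3 (mod 4)` and
`v = (3^{(m+1)/4}-1)(3^{(m+1)/2}+1) + (3^m-1)/2`; codewords are
`c(a,b)_i = Tr(a α^i) + Tr(b α^{iv})`. -/
theorem stmt18 {m : ℕ} (hm : m % 4 = 3)
    {F : Type*} [Field F] [Fintype F] [Algebra (ZMod 3) F]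
    (hF : Fintype.card F = 3 ^ m)
    (α : Fˣ) (hα : ∀ x : Fˣ, x ∈ Subgroup.zpowers α)
    (v : ℕ)
    (hv : v = (3 ^ ((m + 1) / 4) - 1) * (3 ^ ((m + 1) / 2) + 1) + (3 ^ m - 1) / 2)
    (c : F × F → Fin (3 ^ m - 1) → ZMod 3)
    (hc : c = fun (ab : F × F) (i : Fin (3 ^ m - 1)) =>
      Algebra.trace (ZMod 3) F (ab.1 * (α : F) ^ (i : ℕ)) +
        Algebra.trace (ZMod 3) F (ab.2 * (α : F) ^ ((i : ℕ) * v))) :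
    ∀ w : ℕ,
      {ab : F × F | hammingNorm (c ab) = w}.ncard =
        if w = 0 then 1
        else if w = 2 * (3 ^ (m - 1) - 3 ^ ((m - 1) / 2)) then
          (3 ^ m - 1) * (3 ^ (m - 1) + 3 ^ ((m - 1) / 2)) / 2
        else if w = 2 * 3 ^ (m - 1) then
          (3 ^ m - 1) * (3 ^ m - 3 ^ (m - 1) + 1)
        else if w = 2 * (3 ^ (m - 1) + 3 ^ ((m - 1) / 2)) then
          (3 ^ m - 1) * (3 ^ (m - 1) - 3 ^ ((m - 1) / 2)) / 2
        else 0 := by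
  intro w
  obtain ⟨k, hk⟩ : ∃ k, m + 1 = 4 * k := ⟨(m + 1) / 4, by omega⟩
  have hmo : Odd m := by grind
  obtain rfl : v = TernaryCyclicCode.codeExponent m k := by
    rw [hv, show (m + 1) / 4 = k by omega, show (m + 1) / 2 = 2 * k by omega]
    rfl
  have hvo := TernaryCyclicCode.odd_codeExponent hmo k
  have coord_zero := TernaryCyclicCode.coordFunctional_zero (K := ZMod 3) (L := F) hvo.pos.ne'
  have weight_eq (ab : F × F) : hammingNorm (c ab) =
      hammingNorm fun x => TernaryCyclicCode.coordFunctional (K := ZMod 3)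
        (TernaryCyclicCode.codeExponent m k) x ab := by
    rw [← TernaryCyclicCode.hammingNorm_pow_generator hα (by rw [hF])
      (DFunLike.congr_fun coord_zero ab), hc]
    simp only [TernaryCyclicCode.coordFunctional_apply, ← pow_mul]
  have three_pow_sub_one : 3 ^ (m - 1) = (3 ^ ((m - 1) / 2)) ^ 2 := by
    rw [← pow_mul, Nat.div_mul_cancel (by grind)]
  have three_pow : 3 ^ m = 3 * (3 ^ ((m - 1) / 2)) ^ 2 := by
    rw [← three_pow_sub_one, mul_pow_sub_one (by omega)]
  simp only [weight_eq, three_pow_sub_one, three_pow]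
  exact TernaryCyclicCode.ncard_hammingNorm_linear_eq
    (TernaryCyclicCode.coordFunctional_injective _)
    (fun x => ⟨-x, TernaryCyclicCode.coordFunctional_neg hvo x⟩) ⟨0, coord_zero⟩
    (Nat.one_lt_pow (by omega) (by norm_num)) (hF.trans three_pow)
    (by rw [Fintype.card_prod, hF, three_pow]; ring)
    (fun p hp => TernaryCyclicCode.cosSum_coordFunctional_eq_zero_or hk hF three_pow hp) w
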